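/- Under the hypothesis Φ(t)·Φ⁺(t) = E_n for all t, with P(t) := (Φ'(t) + Φ(t)Q(t))·Φ⁺(t), M(t) := Φ⁺(t)·Φ(t), and L(t) := M'(t) + M(t)Q(t) − Q(t)M(t), the identity (d/dt)Φ⁺(t) + Φ⁺(t)·P(t) − Q(t)·Φ⁺(t) = L(t)·Φ⁺(t) holds for all t ∈ ℝ. In particular, if L(t)·Φ⁺(t) = 0 for all t, then (d/dt)Φ⁺(t) + Φ⁺(t)·P(t) − Q(t)·Φ⁺(t) = 0 for all t. -/

import Mathlib

open Matrix

section RightInverse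

variable {R m n : Type*} [Ring R] [Fintype m] [Fintype n] [DecidableEq n]

theorem add_mul_mul_sub_eq_mul_of_mul_eq_one {A : Matrix n m R} {B : Matrix m n R}
    (hAB : A * B = 1) (A' : Matrix n m R) (B' : Matrix m n R) (Q : Matrix m m R) :
    B' + B * ((A' + A * Q) * B) - Q * B =
      (B' * A + B * A' + B * A * Q - Q * (B * A)) * B := by
  have hB' : B' * A * B = B' := by rw [Matrix.mul_assoc, hAB, Matrix.mul_one]
  have hQB : Q * (B * A) * B = Q * B := by
    rw [Matrix.mul_assoc, Matrix.mul_assoc, hAB, Matrix.mul_one]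
  calc B' + B * ((A' + A * Q) * B) - Q * B
      = B' + (B * A' * B + B * A * Q * B) - Q * B := by
        simp only [Matrix.add_mul, Matrix.mul_add, Matrix.mul_assoc]
    _ = B' * A * B + (B * A' * B + B * A * Q * B) - Q * (B * A) * B := by
        rw [hB', hQB]
    _ = (B' * A + B * A' + B * A * Q - Q * (B * A)) * B := by
        simp only [Matrix.add_mul, Matrix.sub_mul, add_assoc]

end RightInverse

section Derivative

variable {𝕜 𝔸 l m n : Type*} [NontriviallyNormedField 𝕜] [NormedRing 𝔸] [NormedAlgebra 𝕜 𝔸]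

theorem hasDerivAt_matrix_mul_apply [Fintype m] {A : 𝕜 → Matrix l m 𝔸} {B : 𝕜 → Matrix m n 𝔸}
    {A' : Matrix l m 𝔸} {B' : Matrix m n 𝔸} {t : 𝕜}
    (hA : ∀ i j, HasDerivAt (fun s => A s i j) (A' i j) t)
    (hB : ∀ i j, HasDerivAt (fun s => B s i j) (B' i j) t) (i : l) (j : n) :
    HasDerivAt (fun s => (A s * B s) i j) ((A' * B t + A t * B') i j) t := by
  simp only [Matrix.add_apply, Matrix.mul_apply, ← Finset.sum_add_distrib]
  exact HasDerivAt.fun_sum fun k _ => (hA i k).fun_mul (hB k j)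

theorem pseudoinverse_derivative_identity_general [Fintype m] [Fintype n] [DecidableEq n]
    {Φ : 𝕜 → Matrix n m 𝔸} {Φp : 𝕜 → Matrix m n 𝔸} {Φ' : Matrix n m 𝔸} {Φp' : Matrix m n 𝔸}
    {M' : Matrix m m 𝔸} {t : 𝕜} (Q : Matrix m m 𝔸)
    (hΦ : ∀ i j, HasDerivAt (fun s => Φ s i j) (Φ' i j) t)
    (hΦp : ∀ i j, HasDerivAt (fun s => Φp s i j) (Φp' i j) t)
    (hM' : ∀ i j, HasDerivAt (fun s => (Φp s * Φ s) i j) (M' i j) t)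
    (hpseudo : Φ t * Φp t = 1) :
    Φp' + Φp t * ((Φ' + Φ t * Q) * Φp t) - Q * Φp t =
      (M' + Φp t * Φ t * Q - Q * (Φp t * Φ t)) * Φp t := by
  have hM'_eq : M' = Φp' * Φ t + Φp t * Φ' :=
    Matrix.ext fun i j => (hM' i j).unique (hasDerivAt_matrix_mul_apply hΦp hΦ i j)
  rw [hM'_eq]
  exact add_mul_mul_sub_eq_mul_of_mul_eq_one hpseudo Φ' Φp' Q

end Derivative

/-- The identity `(d/dt)Φ⁺(t) + Φ⁺(t)P(t) - Q(t)Φ⁺(t) = L(t)Φ⁺(t)` holds, where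
`P(t) = (Φ'(t) + Φ(t)Q(t))Φ⁺(t)`, `M(t) = Φ⁺(t)Φ(t)` and
`L(t) = M'(t) + M(t)Q(t) - Q(t)M(t)`. In particular, if `L(t)Φ⁺(t) = 0` for all `t`,
then `(d/dt)Φ⁺(t) + Φ⁺(t)P(t) - Q(t)Φ⁺(t) = 0` for all `t`. -/
theorem pseudoinverse_derivative_identity (m n : ℕ) (hn : 1 ≤ n) (hnm : n < m)
    (Q : ℝ → Matrix (Fin m) (Fin m) ℝ)
    (Φ : ℝ → Matrix (Fin n) (Fin m) ℝ) (Φp : ℝ → Matrix (Fin m) (Fin n) ℝ)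
    (Φ' : ℝ → Matrix (Fin n) (Fin m) ℝ) (Φp' : ℝ → Matrix (Fin m) (Fin n) ℝ)
    (hQ : ∀ i j, Continuous fun t => Q t i j)
    (hΦ : ∀ t i j, HasDerivAt (fun s => Φ s i j) (Φ' t i j) t)
    (hΦc : ∀ i j, Continuous fun t => Φ' t i j)
    (hΦp : ∀ t i j, HasDerivAt (fun s => Φp s i j) (Φp' t i j) t)
    (hΦpc : ∀ i j, Continuous fun t => Φp' t i j)
    (hpseudo : ∀ t, Φ t * Φp t = 1)
    (M M' : ℝ → Matrix (Fin m) (Fin m) ℝ)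
    (hM : ∀ t, M t = Φp t * Φ t)
    (hM' : ∀ t i j, HasDerivAt (fun s => M s i j) (M' t i j) t)
    (P : ℝ → Matrix (Fin n) (Fin n) ℝ)
    (hP : ∀ t, P t = (Φ' t + Φ t * Q t) * Φp t)
    (L : ℝ → Matrix (Fin m) (Fin m) ℝ)
    (hLdef : ∀ t, L t = M' t + M t * Q t - Q t * M t) :
    (∀ t : ℝ, Φp' t + Φp t * P t - Q t * Φp t = L t * Φp t) ∧
    ((∀ t : ℝ, L t * Φp t = 0) → ∀ t : ℝ, Φp' t + Φp t * P t - Q t * Φp t = 0) := by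
  obtain rfl := funext hM
  obtain rfl := funext hP
  obtain rfl := funext hLdef
  have identity t :=
    pseudoinverse_derivative_identity_general (Q t) (hΦ t) (hΦp t) (hM' t) (hpseudo t)
  exact ⟨identity, fun hL t => (identity t).trans (hL t)⟩
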